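/- Let 𝓑 be an admissible W-orbit of sets of mutually orthogonal positive roots. Then (𝓑, <) has a unique maximal element B₀ (i.e. a unique B₀ ∈ 𝓑 such that there is no C ∈ 𝓑 with B₀ < C). Moreover, for every B ∈ 𝓑 there exist nodes i_1, …, i_s with B = r_{i_1} r_{i_2} ⋯ r_{i_s}·B₀ and B₀ > r_{i_s}·B₀ > r_{i_{s−1}} r_{i_s}·B₀ > ⋯ > r_{i_1} r_{i_2} ⋯ r_{i_s}·B₀ = B. -/

import Mathlib

/-!
The maximal element is obtained by rewriting. Call `r i` ascending at `B` (`Up`) if the lowest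
roots of `B` moved by `r i` are all raised, i.e. have inner product `-1` with `α i`.

* The height order compares two sets by inclusion at the lowest height where they differ, so it is
  a strict partial order on the finite orbit (`Below`, `lt_iff_below`), and ascending reflections
  go up in it (`Up.below`).
* If `r i` raises `β ∈ B` and lowers `γ ∈ B`, then `γ - β - α i` is a root. No root has height `0`,
  so `ht γ ≠ ht β + 1` (`two_gap`). Hence `B` and `r i · B` are always comparable
  (`up_trichotomy`).
* Ascending reflections are locally confluent (`local_confluence`). For orthogonal nodes the two
  ascents from `B` meet in `r i r j · B`, except when `B` contains some `β` and `β + α i + α j`;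
  in that case admissibility gives `r i · B = r j · B` (`up_comm`). For adjacent nodes they meet in
  `r i r j r i · B = r j r i r j · B`, and every step along both sides of the hexagon ascends
  (`up_braid`, resting on the sharper gap `three_gap`).
* Newman's lemma (`exists_normal_form`) gives each `B` a unique terminal set of its ascents.
  Since neighbours `B`, `r i · B` are comparable, the terminal set is the same throughout the orbit
  (`exists_top`). It is the maximal element, and ascents to it, read backwards, are the required
  descending chains (`exists_chain`).
-/

open scoped InnerProductSpace

/-- A finite crystallographic simply laced root system `Φ` in a real inner
product space, normalized so that `⟪β, β⟫ = 2` for all roots, together with a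
fixed base `α 1, …, α n` (the nodes of the diagram `M`), the corresponding set
`Pos` of positive roots, and the height linear functional `ht`. -/
structure SLRS (V : Type) [NormedAddCommGroup V] [InnerProductSpace ℝ V] where
  /-- the number of nodes of the diagram -/
  n : ℕ
  /-- the set of roots -/
  Φ : Set V
  /-- the set of positive roots -/
  Pos : Set V
  /-- the simple roots -/
  α : Fin n → V
  /-- the height functional: heights are sums of coefficients on simple roots -/
  ht : V →ₗ[ℝ] ℝ
  finite : Φ.Finite
  pos_subset : Pos ⊆ Φ
  mem_pos_or_neg : ∀ β ∈ Φ, β ∈ Pos ∨ -β ∈ Pos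
  not_pos_and_neg : ∀ β ∈ Pos, -β ∉ Pos
  alpha_pos : ∀ i, α i ∈ Pos
  norm_two : ∀ β ∈ Φ, ⟪β, β⟫_ℝ = 2
  inner_int : ∀ β ∈ Φ, ∀ γ ∈ Φ, ∃ z : ℤ, ⟪β, γ⟫_ℝ = (z : ℝ)
  reflect_mem : ∀ β ∈ Φ, ∀ γ ∈ Φ, β - ⟪β, γ⟫_ℝ • γ ∈ Φ
  reduced : ∀ β ∈ Φ, ∀ t : ℝ, t • β ∈ Φ → t = 1 ∨ t = -1
  pos_coeff : ∀ β ∈ Pos, ∃ a : Fin n → ℕ, β = ∑ i, (a i : ℝ) • α i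
  ht_alpha : ∀ i, ht (α i) = 1

namespace SLRS

variable {V : Type} [NormedAddCommGroup V] [InnerProductSpace ℝ V] (S : SLRS V)

/-- Adjacency of two nodes of the diagram: `i ∼ j` iff `⟪α i, α j⟫ = -1`. -/
def adj (i j : Fin S.n) : Prop := ⟪S.α i, S.α j⟫_ℝ = -1

/-- The reflection along a root `δ` (normalized so that `⟪δ, δ⟫ = 2`). -/
def reflRoot (δ : V) : V → V := fun v => v - ⟪v, δ⟫_ℝ • δ

/-- The fundamental reflection `r i`. -/
def refl (i : Fin S.n) : V → V := reflRoot (S.α i)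

/-- A set of mutually orthogonal positive roots. -/
def IsOrthoSet (B : Set V) : Prop :=
  B ⊆ S.Pos ∧ ∀ β ∈ B, ∀ γ ∈ B, β ≠ γ → ⟪β, γ⟫_ℝ = 0

/-- The action of a map `w` on a set `B` of positive roots:
`w·B = Φ⁺ ∩ {± w β : β ∈ B}`. -/
def mapSet (w : V → V) (B : Set V) : Set V :=
  {x ∈ S.Pos | ∃ β ∈ B, w β = x ∨ w β = -x}

/-- The action of the fundamental reflection `r i` on a set of positive roots. -/
def rAct (i : Fin S.n) (B : Set V) : Set V := S.mapSet (S.refl i) B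

/-- The action of the reflection along a root `δ` on a set of positive roots. -/
def reflAct (δ : V) (B : Set V) : Set V := S.mapSet (reflRoot δ) B

/-- The `W`-orbit of `B`, `W` being generated by the fundamental reflections. -/
def orbitOf (B : Set V) : Set (Set V) :=
  {C | Relation.ReflTransGen (fun X Y => ∃ i, Y = S.rAct i X) B C}

/-- `𝓑` is a `W`-orbit of sets of mutually orthogonal positive roots. -/
def IsOrbit (𝓑 : Set (Set V)) : Prop :=
  ∃ B, S.IsOrthoSet B ∧ 𝓑 = S.orbitOf B

/-- Admissibility of a `W`-orbit of sets of mutually orthogonal positive roots. -/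
def Admissible (𝓑 : Set (Set V)) : Prop :=
  S.IsOrbit 𝓑 ∧ ∀ B ∈ 𝓑, ∀ i j : Fin S.n, i ≠ j → ¬ S.adj i j →
    (∃ γ, γ ∈ B ∧ γ - S.α i + S.α j ∈ B) → S.rAct i B = S.rAct j B

/-- The height order: `B < C` iff `B ≠ C` and the minimal height of an element
of `B \ C` is smaller than the minimal height of an element of `C \ B`. -/
def lt (B C : Set V) : Prop :=
  B ≠ C ∧ sInf (⇑S.ht '' (B \ C)) < sInf (⇑S.ht '' (C \ B))

/-- The map `V → V` determined by the word `l = [i₁, …, iₛ]`,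
namely `r i₁ ∘ r i₂ ∘ ⋯ ∘ r iₛ`. -/
def wordMap (l : List (Fin S.n)) : V → V := l.foldr (fun i f => S.refl i ∘ f) id

/-- A map belongs to the Weyl group `W` iff it is realized by a word in the
fundamental reflections. -/
def InW (w : V → V) : Prop := ∃ l : List (Fin S.n), S.wordMap l = w

/-- The Coxeter length of an element of `W`: the minimal length of a word in
the fundamental reflections representing it. -/
noncomputable def len (w : V → V) : ℕ :=
  sInf {k | ∃ l : List (Fin S.n), l.length = k ∧ S.wordMap l = w}

/-- The action of `w ∈ W` on a set of positive roots. -/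
def wAct (w : V → V) (B : Set V) : Set V := S.mapSet w B

/-- `r i₁ · (r i₂ · ⋯ (r iₛ · B))` for the word `l = [i₁, …, iₛ]`. -/
def suffixAct (l : List (Fin S.n)) (B : Set V) : Set V := l.foldr S.rAct B

/-- The chain `B > r iₛ · B > r iₛ₋₁ r iₛ · B > ⋯ > r i₁ ⋯ r iₛ · B` obtained by
successively applying the letters of the word `l = [i₁, …, iₛ]` to `B` is
strictly descending at every step. -/
def DescChain (l : List (Fin S.n)) (B : Set V) : Prop :=
  ∀ k < l.length, S.lt (S.suffixAct (l.drop k) B) (S.suffixAct (l.drop (k + 1)) B)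

end SLRS

open SLRS

variable {V : Type} [NormedAddCommGroup V] [InnerProductSpace ℝ V]

namespace SLRS

section Roots

/-! ### Roots and heights -/

lemma inner_cases (S : SLRS V) {β γ : V} (hβ : β ∈ S.Φ) (hγ : γ ∈ S.Φ) :
    ⟪β, γ⟫_ℝ = -2 ∨ ⟪β, γ⟫_ℝ = -1 ∨ ⟪β, γ⟫_ℝ = 0 ∨ ⟪β, γ⟫_ℝ = 1 ∨ ⟪β, γ⟫_ℝ = 2 := by
  obtain ⟨z, hz⟩ := S.inner_int β hβ γ hγ
  have h := real_inner_mul_inner_self_le β γ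
  rw [S.norm_two β hβ, S.norm_two γ hγ, hz] at h
  have h' : z * z ≤ 2 * 2 := by exact_mod_cast h
  have h1 : z ≤ 2 := by nlinarith
  have h2 : -2 ≤ z := by nlinarith
  rw [hz]
  interval_cases z <;> norm_num

lemma eq_of_inner_two (S : SLRS V) {β γ : V} (hβ : β ∈ S.Φ) (hγ : γ ∈ S.Φ)
    (h : ⟪β, γ⟫_ℝ = 2) : β = γ := by
  have h0 : ⟪β - γ, β - γ⟫_ℝ = 0 := by
    rw [real_inner_sub_sub_self, S.norm_two β hβ, S.norm_two γ hγ, h]; norm_num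
  exact sub_eq_zero.1 (inner_self_eq_zero.1 h0)

lemma eq_neg_of_inner (S : SLRS V) {β γ : V} (hβ : β ∈ S.Φ) (hγ : γ ∈ S.Φ)
    (h : ⟪β, γ⟫_ℝ = -2) : β = -γ := by
  have h0 : ⟪β + γ, β + γ⟫_ℝ = 0 := by
    rw [real_inner_add_add_self, S.norm_two β hβ, S.norm_two γ hγ, h]; norm_num
  exact eq_neg_of_add_eq_zero_left (inner_self_eq_zero.1 h0)

lemma sub_mem (S : SLRS V) {β γ : V} (hβ : β ∈ S.Φ) (hγ : γ ∈ S.Φ)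
    (h : ⟪β, γ⟫_ℝ = 1) : β - γ ∈ S.Φ := by
  have := S.reflect_mem β hβ γ hγ
  rwa [h, one_smul] at this

lemma add_mem (S : SLRS V) {β γ : V} (hβ : β ∈ S.Φ) (hγ : γ ∈ S.Φ)
    (h : ⟪β, γ⟫_ℝ = -1) : β + γ ∈ S.Φ := by
  have := S.reflect_mem β hβ γ hγ
  rwa [h, neg_one_smul, sub_neg_eq_add] at this

lemma ht_pos_nat (S : SLRS V) {β : V} (hβ : β ∈ S.Pos) : ∃ m : ℕ, 1 ≤ m ∧ S.ht β = m := by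
  obtain ⟨a, ha⟩ := S.pos_coeff β hβ
  refine ⟨∑ i, a i, ?_, ?_⟩
  · by_contra hlt
    have h0 : ∑ i, a i = 0 := by omega
    have h1 : β = 0 := by
      rw [ha]
      refine Finset.sum_eq_zero fun i hi => ?_
      rw [Finset.sum_eq_zero_iff.1 h0 i hi]; simp
    have h2 := S.norm_two β (S.pos_subset hβ)
    rw [h1] at h2
    simp at h2
  · rw [ha]; simp [map_sum, S.ht_alpha]

lemma ht_pos (S : SLRS V) {β : V} (hβ : β ∈ S.Pos) : 1 ≤ S.ht β := by
  obtain ⟨m, hm, h⟩ := S.ht_pos_nat hβ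
  rw [h]; exact_mod_cast hm

lemma ht_ne_zero (S : SLRS V) {β : V} (hβ : β ∈ S.Φ) : S.ht β ≠ 0 := by
  rcases S.mem_pos_or_neg β hβ with h | h
  · have := S.ht_pos h; linarith
  · have := S.ht_pos h; rw [map_neg] at this; linarith

/-- Integrality of heights: a strict inequality with one value excluded improves by one. -/
lemma ht_gap (S : SLRS V) {β γ : V} (hβ : β ∈ S.Pos) (hγ : γ ∈ S.Pos) (k : ℕ)
    (h : S.ht β + k ≤ S.ht γ) (hne : S.ht γ ≠ S.ht β + k) : S.ht β + k + 1 ≤ S.ht γ := by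
  obtain ⟨a, -, ha⟩ := S.ht_pos_nat hβ
  obtain ⟨b, -, hb⟩ := S.ht_pos_nat hγ
  rw [ha, hb] at h hne ⊢
  have h1 : a + k ≤ b := by exact_mod_cast h
  have h2 : b ≠ a + k := by exact_mod_cast hne
  have h3 : a + k + 1 ≤ b := by omega
  exact_mod_cast h3

lemma ht_lt_iff (S : SLRS V) {β γ : V} (hβ : β ∈ S.Pos) (hγ : γ ∈ S.Pos)
    (h : S.ht β < S.ht γ) : S.ht β + 1 ≤ S.ht γ := by
  simpa using S.ht_gap hβ hγ 0 (by simpa using h.le) (by simpa using h.ne')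

lemma alpha_mem (S : SLRS V) (i : Fin S.n) : S.α i ∈ S.Φ := S.pos_subset (S.alpha_pos i)

/-- Two simple roots are equal, orthogonal, or adjacent: inner product `1` would give a root of
height `0`. -/
lemma alpha_cases (S : SLRS V) (i j : Fin S.n) :
    S.α i = S.α j ∨ ⟪S.α i, S.α j⟫_ℝ = 0 ∨ ⟪S.α i, S.α j⟫_ℝ = -1 := by
  rcases S.inner_cases (S.alpha_mem i) (S.alpha_mem j) with h | h | h | h | h
  · exfalso
    have h1 := congrArg S.ht (S.eq_neg_of_inner (S.alpha_mem i) (S.alpha_mem j) h)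
    rw [map_neg, S.ht_alpha, S.ht_alpha] at h1
    norm_num at h1
  · exact Or.inr (Or.inr h)
  · exact Or.inr (Or.inl h)
  · exfalso
    refine S.ht_ne_zero (S.sub_mem (S.alpha_mem i) (S.alpha_mem j) h) ?_
    rw [map_sub, S.ht_alpha, S.ht_alpha, sub_self]
  · exact Or.inl (S.eq_of_inner_two (S.alpha_mem i) (S.alpha_mem j) h)

/-! ### Fundamental reflections -/

lemma refl_apply (S : SLRS V) (i : Fin S.n) (β : V) :
    S.refl i β = β - ⟪β, S.α i⟫_ℝ • S.α i := rfl

lemma alpha_self (S : SLRS V) (i : Fin S.n) : ⟪S.α i, S.α i⟫_ℝ = 2 :=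
  S.norm_two _ (S.alpha_mem i)

lemma inner_refl (S : SLRS V) (i : Fin S.n) (β γ : V) :
    ⟪S.refl i β, γ⟫_ℝ = ⟪β, γ⟫_ℝ - ⟪β, S.α i⟫_ℝ * ⟪S.α i, γ⟫_ℝ := by
  rw [refl_apply, inner_sub_left, real_inner_smul_left]

lemma inner_refl_self (S : SLRS V) (i : Fin S.n) (β : V) :
    ⟪S.refl i β, S.α i⟫_ℝ = -⟪β, S.α i⟫_ℝ := by
  rw [inner_refl, alpha_self]; ring

lemma ht_refl (S : SLRS V) (i : Fin S.n) (β : V) :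
    S.ht (S.refl i β) = S.ht β - ⟪β, S.α i⟫_ℝ := by
  rw [refl_apply, map_sub, map_smul, S.ht_alpha, smul_eq_mul, mul_one]

lemma refl_refl (S : SLRS V) (i : Fin S.n) (β : V) : S.refl i (S.refl i β) = β := by
  rw [S.refl_apply i (S.refl i β), inner_refl_self, refl_apply, neg_smul, sub_neg_eq_add,
    sub_add_cancel]

lemma refl_injective (S : SLRS V) (i : Fin S.n) : Function.Injective (S.refl i) :=
  Function.LeftInverse.injective (S.refl_refl i)

lemma inner_refl_refl (S : SLRS V) (i : Fin S.n) (β γ : V) :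
    ⟪S.refl i β, S.refl i γ⟫_ℝ = ⟪β, γ⟫_ℝ := by
  rw [inner_refl, real_inner_comm (S.refl i γ), real_inner_comm (S.refl i γ), inner_refl,
    inner_refl_self, real_inner_comm γ β, real_inner_comm (S.α i) β]
  ring

lemma refl_alpha (S : SLRS V) (i : Fin S.n) : S.refl i (S.α i) = -S.α i := by
  rw [refl_apply, alpha_self, two_smul]; abel

lemma refl_mem (S : SLRS V) (i : Fin S.n) {β : V} (hβ : β ∈ S.Φ) : S.refl i β ∈ S.Φ :=
  S.reflect_mem β hβ _ (S.alpha_mem i)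

/-- `r i` permutes the positive roots other than `α i`. The heights of `β` and `-r i β` add up to
`⟪β, α i⟫ ≤ 2`, so both can be positive only if `β = α i`. -/
lemma refl_pos (S : SLRS V) (i : Fin S.n) {β : V} (hβ : β ∈ S.Pos) (hne : β ≠ S.α i) :
    S.refl i β ∈ S.Pos := by
  rcases S.mem_pos_or_neg _ (S.refl_mem i (S.pos_subset hβ)) with h | h
  · exact h
  · exfalso
    have h1 := S.ht_pos h
    have h2 := S.ht_pos hβ
    rw [map_neg, ht_refl] at h1
    rcases S.inner_cases (S.pos_subset hβ) (S.alpha_mem i) with h | h | h | h | h <;>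
      first
      | linarith
      | exact hne (S.eq_of_inner_two (S.pos_subset hβ) (S.alpha_mem i) h)

lemma refl_comm (S : SLRS V) {i j : Fin S.n} (h : ⟪S.α i, S.α j⟫_ℝ = 0) (β : V) :
    S.refl i (S.refl j β) = S.refl j (S.refl i β) := by
  have h' : ⟪S.α j, S.α i⟫_ℝ = 0 := by rw [real_inner_comm]; exact h
  rw [S.refl_apply i (S.refl j β), S.refl_apply j (S.refl i β), inner_refl, inner_refl, h, h',
    refl_apply, refl_apply]
  simp only [mul_zero, sub_zero]
  abel

lemma refl_braid (S : SLRS V) {i j : Fin S.n} (h : ⟪S.α i, S.α j⟫_ℝ = -1) (β : V) :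
    S.refl i (S.refl j (S.refl i β)) = S.refl j (S.refl i (S.refl j β)) := by
  have h' : ⟪S.α j, S.α i⟫_ℝ = -1 := by rw [real_inner_comm]; exact h
  simp only [refl_apply, inner_sub_left, real_inner_smul_left, alpha_self, h, h']
  module

end Roots

section Action

/-! ### The action on sets of mutually orthogonal positive roots -/

lemma not_mem_of_alpha (S : SLRS V) {B : Set V} (hB : S.IsOrthoSet B) {i : Fin S.n} {β : V}
    (hβ : β ∈ B) (h : ⟪β, S.α i⟫_ℝ = -1) : S.α i ∉ B := by
  intro hi
  by_cases hne : β = S.α i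
  · rw [hne, alpha_self] at h; norm_num at h
  · rw [hB.2 β hβ _ hi hne] at h; norm_num at h

lemma rAct_eq_image (S : SLRS V) {B : Set V} (hB : B ⊆ S.Pos) {i : Fin S.n}
    (hi : S.α i ∉ B) : S.rAct i B = S.refl i '' B := by
  have key : ∀ β ∈ B, S.refl i β ∈ S.Pos := fun β hβ =>
    S.refl_pos i (hB hβ) (fun h => hi (h ▸ hβ))
  ext x
  constructor
  · rintro ⟨hx, β, hβ, h | h⟩
    · exact ⟨β, hβ, h⟩
    · exact absurd (h ▸ key β hβ) (S.not_pos_and_neg x hx)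
  · rintro ⟨β, hβ, rfl⟩
    exact ⟨key β hβ, β, hβ, Or.inl rfl⟩

/-- If no root of `B` has inner product `±1` with `α i`, then `r i` fixes `B`. -/
lemma rAct_eq_self (S : SLRS V) {B : Set V} (hB : B ⊆ S.Pos) {i : Fin S.n}
    (h : ∀ β ∈ B, β = S.α i ∨ ⟪β, S.α i⟫_ℝ = 0) : S.rAct i B = B := by
  have key : ∀ β ∈ B, S.refl i β = β ∨ (β = S.α i ∧ S.refl i β = -β) := fun β hβ => by
    rcases h β hβ with h | h
    · exact Or.inr ⟨h, by rw [h, refl_alpha]⟩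
    · left; rw [refl_apply, h, zero_smul, sub_zero]
  ext x
  constructor
  · rintro ⟨hx, β, hβ, h⟩
    rcases key β hβ with h' | ⟨-, h'⟩ <;> rw [h'] at h <;> rcases h with h | h
    · exact h ▸ hβ
    · exact absurd (h ▸ hB hβ) (S.not_pos_and_neg x hx)
    · exact absurd (hB hβ) (by rw [← neg_neg β, h]; exact S.not_pos_and_neg x hx)
    · rw [neg_inj] at h; exact h ▸ hβ
  · intro hx
    refine ⟨hB hx, x, hx, ?_⟩
    rcases key x hx with h | ⟨-, h⟩
    · exact Or.inl h
    · exact Or.inr h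

lemma rAct_of_mem (S : SLRS V) {B : Set V} (hB : S.IsOrthoSet B) {i : Fin S.n}
    (hi : S.α i ∈ B) : S.rAct i B = B := by
  refine S.rAct_eq_self hB.1 fun β hβ => ?_
  by_cases h : β = S.α i
  · exact Or.inl h
  · exact Or.inr (hB.2 β hβ _ hi h)

lemma alpha_not_mem_image (S : SLRS V) {B : Set V} (hB : B ⊆ S.Pos) (i : Fin S.n) :
    S.α i ∉ S.refl i '' B := by
  rintro ⟨β, hβ, h⟩
  have h1 := S.refl_refl i β
  rw [h, refl_alpha] at h1
  exact S.not_pos_and_neg _ (S.alpha_pos i) (h1 ▸ hB hβ)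

lemma isOrthoSet_rAct (S : SLRS V) {B : Set V} (hB : S.IsOrthoSet B) (i : Fin S.n) :
    S.IsOrthoSet (S.rAct i B) := by
  by_cases hi : S.α i ∈ B
  · rwa [S.rAct_of_mem hB hi]
  · refine ⟨fun x hx => hx.1, ?_⟩
    rw [S.rAct_eq_image hB.1 hi]
    rintro _ ⟨β, hβ, rfl⟩ _ ⟨γ, hγ, rfl⟩ hne
    rw [inner_refl_refl]
    exact hB.2 β hβ γ hγ (fun h => hne (h ▸ rfl))

lemma rAct_rAct (S : SLRS V) {B : Set V} (hB : S.IsOrthoSet B) (i : Fin S.n) :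
    S.rAct i (S.rAct i B) = B := by
  by_cases hi : S.α i ∈ B
  · rw [S.rAct_of_mem hB hi, S.rAct_of_mem hB hi]
  · have h1 := (S.isOrthoSet_rAct hB i).1
    rw [S.rAct_eq_image hB.1 hi] at h1 ⊢
    rw [S.rAct_eq_image h1 (S.alpha_not_mem_image hB.1 i), Set.image_image]
    simp [refl_refl]

lemma ncard_rAct (S : SLRS V) {B : Set V} (hB : S.IsOrthoSet B) (i : Fin S.n) :
    (S.rAct i B).ncard = B.ncard := by
  by_cases hi : S.α i ∈ B
  · rw [S.rAct_of_mem hB hi]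
  · rw [S.rAct_eq_image hB.1 hi, Set.ncard_image_of_injective _ (S.refl_injective i)]

lemma finite_pos (S : SLRS V) {B : Set V} (hB : B ⊆ S.Pos) : B.Finite :=
  S.finite.subset (hB.trans S.pos_subset)

end Action

section Order

/-! ### The height order -/

/-- A version of the height order on sets of equal cardinality which avoids infima:
some root of `B \ C` is lower than every root of `C \ B`. -/
def Below (S : SLRS V) (B C : Set V) : Prop :=
  ∃ β ∈ B \ C, ∀ γ ∈ C \ B, S.ht β < S.ht γ

lemma Below.trans {S : SLRS V} {B C D : Set V} (h₁ : S.Below B C) (h₂ : S.Below C D) :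
    S.Below B D := by
  obtain ⟨β, ⟨hβB, hβC⟩, hβ⟩ := h₁
  obtain ⟨γ, ⟨hγC, hγD⟩, hγ⟩ := h₂
  rcases le_or_gt (S.ht β) (S.ht γ) with hle | hlt
  · refine ⟨β, ⟨hβB, fun hβD => absurd (hγ β ⟨hβD, hβC⟩) hle.not_gt⟩, ?_⟩
    rintro δ ⟨hδD, hδB⟩
    by_cases hδC : δ ∈ C
    · exact hβ δ ⟨hδC, hδB⟩
    · exact hle.trans_lt (hγ δ ⟨hδD, hδC⟩)
  · have hγB : γ ∈ B := by
      by_contra hγB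
      exact absurd (hβ γ ⟨hγC, hγB⟩) hlt.not_gt
    refine ⟨γ, ⟨hγB, hγD⟩, ?_⟩
    rintro δ ⟨hδD, hδB⟩
    by_cases hδC : δ ∈ C
    · exact hlt.trans (hβ δ ⟨hδC, hδB⟩)
    · exact hγ δ ⟨hδD, hδC⟩

lemma Below.irrefl {S : SLRS V} {B : Set V} : ¬ S.Below B B := by
  rintro ⟨β, ⟨h₁, h₂⟩, -⟩
  exact h₂ h₁

/-- For finite sets of equal cardinality neither difference is empty when the sets differ, so no
junk value of an infimum is involved. -/
lemma lt_iff_below (S : SLRS V) {B C : Set V} (hB : B.Finite) (hC : C.Finite)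
    (hcard : B.ncard = C.ncard) : S.lt B C ↔ S.Below B C := by
  constructor
  · rintro ⟨hne, hlt⟩
    have hBC : (B \ C).Nonempty := by
      rw [Set.sdiff_nonempty]
      intro hsub
      exact hne (Set.eq_of_subset_of_ncard_le hsub hcard.ge hC)
    obtain ⟨β, hβ, hmin⟩ := (hBC.image S.ht).csInf_mem ((hB.subset Set.sdiff_subset).image S.ht)
    refine ⟨β, hβ, fun γ hγ => ?_⟩
    rw [hmin]
    exact hlt.trans_le (csInf_le ((hC.subset Set.sdiff_subset).image S.ht).bddBelow ⟨γ, hγ, rfl⟩)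
  · rintro ⟨β, hβ, h⟩
    have hne : B ≠ C := by rintro rfl; exact hβ.2 hβ.1
    have hCB : (C \ B).Nonempty := by
      rw [Set.sdiff_nonempty]
      intro hsub
      exact hne (Set.eq_of_subset_of_ncard_le hsub hcard.le hB).symm
    refine ⟨hne, ?_⟩
    obtain ⟨γ, hγ, hmin⟩ := (hCB.image S.ht).csInf_mem ((hC.subset Set.sdiff_subset).image S.ht)
    rw [← hmin]
    exact (csInf_le ((hB.subset Set.sdiff_subset).image S.ht).bddBelow ⟨β, hβ, rfl⟩).trans_lt
      (h γ hγ)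

/-! ### Ascending reflections -/

/-- `r i` raises `B`: among the roots of `B` moved by `r i`, those of minimal height are all
raised. -/
def Up (S : SLRS V) (i : Fin S.n) (B : Set V) : Prop :=
  (∃ β ∈ B, ⟪β, S.α i⟫_ℝ = -1) ∧
    ∀ γ ∈ B, ⟪γ, S.α i⟫_ℝ = 1 → ∃ β ∈ B, ⟪β, S.α i⟫_ℝ = -1 ∧ S.ht β < S.ht γ

/-- If `r i` raises `β` and lowers the orthogonal root `γ`, then `γ - β - α i` is a root. -/
lemma sub_sub_mem (S : SLRS V) {B : Set V} (hB : S.IsOrthoSet B) {i : Fin S.n} {β γ : V}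
    (hβ : β ∈ B) (hγ : γ ∈ B) (h₁ : ⟪β, S.α i⟫_ℝ = -1) (h₂ : ⟪γ, S.α i⟫_ℝ = 1) :
    γ - (β + S.α i) ∈ S.Φ := by
  have hne : γ ≠ β := by rintro rfl; rw [h₁] at h₂; norm_num at h₂
  refine S.sub_mem (S.pos_subset (hB.1 hγ))
    (S.add_mem (S.pos_subset (hB.1 hβ)) (S.alpha_mem i) h₁) ?_
  rw [inner_add_right, h₂, hB.2 γ hγ β hβ hne, zero_add]

/-- Since the root `γ - β - α i` has nonzero height, a strict height inequality between
a raised and a lowered root is a gap of at least two. -/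
lemma two_gap (S : SLRS V) {B : Set V} (hB : S.IsOrthoSet B) {i : Fin S.n} {β γ : V}
    (hβ : β ∈ B) (hγ : γ ∈ B) (h₁ : ⟪β, S.α i⟫_ℝ = -1) (h₂ : ⟪γ, S.α i⟫_ℝ = 1)
    (hlt : S.ht β < S.ht γ) : S.ht β + 2 ≤ S.ht γ := by
  have h0 := S.ht_ne_zero (S.sub_sub_mem hB hβ hγ h₁ h₂)
  have h1 := S.ht_gap (hB.1 hβ) (hB.1 hγ) 1
    (by simpa using S.ht_lt_iff (hB.1 hβ) (hB.1 hγ) hlt)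
    (fun h => h0 (by rw [map_sub, map_add, S.ht_alpha, h]; push_cast; ring))
  push_cast at h1
  linarith

/-- If moreover `β` and `γ` are orthogonal to a neighbour `α j` of `α i`, the gap is at least
three: otherwise the root `γ - β - α i` has height `1` and inner product `1` with `α j`, and
subtracting `α j` gives a root of height `0`. -/
lemma three_gap (S : SLRS V) {B : Set V} (hB : S.IsOrthoSet B) {i j : Fin S.n} {β γ : V}
    (hij : ⟪S.α i, S.α j⟫_ℝ = -1)
    (hβ : β ∈ B) (hγ : γ ∈ B) (h₁ : ⟪β, S.α i⟫_ℝ = -1) (h₂ : ⟪γ, S.α i⟫_ℝ = 1)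
    (h₁' : ⟪β, S.α j⟫_ℝ = 0) (h₂' : ⟪γ, S.α j⟫_ℝ = 0)
    (hlt : S.ht β < S.ht γ) : S.ht β + 3 ≤ S.ht γ := by
  have hmem := S.sub_sub_mem hB hβ hγ h₁ h₂
  have h0 := S.ht_ne_zero (S.sub_mem hmem (S.alpha_mem j)
    (by rw [inner_sub_left, inner_add_left, h₁', h₂', hij]; norm_num))
  have h1 := S.ht_gap (hB.1 hβ) (hB.1 hγ) 2
    (by simpa using S.two_gap hB hβ hγ h₁ h₂ hlt)
    (fun h => h0 (by
      rw [map_sub, map_sub, map_add, S.ht_alpha, S.ht_alpha, h]; push_cast; ring))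
  push_cast at h1
  linarith

/-- An ascending reflection has a lowest moved root, and it is raised. -/
lemma Up.exists_min {S : SLRS V} {i : Fin S.n} {B : Set V} (hB : S.IsOrthoSet B)
    (h : S.Up i B) : ∃ β ∈ B, ⟪β, S.α i⟫_ℝ = -1 ∧
      (∀ γ ∈ B, ⟪γ, S.α i⟫_ℝ = -1 → S.ht β ≤ S.ht γ) ∧
      (∀ γ ∈ B, ⟪γ, S.α i⟫_ℝ = 1 → S.ht β + 2 ≤ S.ht γ) := by
  obtain ⟨⟨β₀, hβ₀, h₀⟩, h⟩ := h
  obtain ⟨β, ⟨hβ, hβi⟩, hmin⟩ := Set.exists_min_image {β | β ∈ B ∧ ⟪β, S.α i⟫_ℝ = -1} S.ht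
    ((S.finite_pos hB.1).subset fun x hx => hx.1) ⟨β₀, hβ₀, h₀⟩
  refine ⟨β, hβ, hβi, fun γ hγ h' => hmin γ ⟨hγ, h'⟩, fun γ hγ h' => ?_⟩
  obtain ⟨δ, hδ, hδi, hlt⟩ := h γ hγ h'
  exact S.two_gap hB hβ hγ hβi h' ((hmin δ ⟨hδ, hδi⟩).trans_lt hlt)

lemma Up.alpha_not_mem {S : SLRS V} {i : Fin S.n} {B : Set V} (hB : S.IsOrthoSet B)
    (h : S.Up i B) : S.α i ∉ B := by
  obtain ⟨⟨β, hβ, h⟩, -⟩ := h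
  exact S.not_mem_of_alpha hB hβ h

lemma inner_cases_of_mem (S : SLRS V) {i : Fin S.n} {β : V}
    (hβ : β ∈ S.Pos) (hne : β ≠ S.α i) :
    ⟪β, S.α i⟫_ℝ = -1 ∨ ⟪β, S.α i⟫_ℝ = 0 ∨ ⟪β, S.α i⟫_ℝ = 1 := by
  rcases S.inner_cases (S.pos_subset hβ) (S.alpha_mem i) with h | h | h | h | h
  · exfalso
    rw [S.eq_neg_of_inner (S.pos_subset hβ) (S.alpha_mem i) h] at hβ
    exact S.not_pos_and_neg _ (S.alpha_pos i) hβ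
  · exact Or.inl h
  · exact Or.inr (Or.inl h)
  · exact Or.inr (Or.inr h)
  · exact absurd (S.eq_of_inner_two (S.pos_subset hβ) (S.alpha_mem i) h) hne

lemma Up.below {S : SLRS V} {i : Fin S.n} {B : Set V} (hB : S.IsOrthoSet B)
    (h : S.Up i B) : S.Below B (S.rAct i B) := by
  have hi := h.alpha_not_mem hB
  obtain ⟨β, hβ, hβi, h₁, h₂⟩ := h.exists_min hB
  rw [S.rAct_eq_image hB.1 hi]
  refine ⟨β, ⟨hβ, ?_⟩, ?_⟩
  · -- `r i β ∈ B` has inner product `1` with `β ∈ B`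
    rintro ⟨δ, hδ, h⟩
    have h3 : δ = S.refl i β := by rw [← h, refl_refl]
    have h4 : ⟪δ, β⟫_ℝ = 1 := by
      rw [h3, inner_refl, S.norm_two β (S.pos_subset (hB.1 hβ)), real_inner_comm β, hβi]
      norm_num
    by_cases h5 : δ = β
    · rw [h5, S.norm_two β (S.pos_subset (hB.1 hβ))] at h4; norm_num at h4
    · rw [hB.2 δ hδ β hβ h5] at h4; norm_num at h4
  · rintro _ ⟨⟨γ, hγ, rfl⟩, hγB⟩
    rw [ht_refl]
    rcases S.inner_cases_of_mem (hB.1 hγ) (fun h => hi (h ▸ hγ)) with h | h | h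
    · have := h₁ γ hγ h; rw [h]; linarith
    · exfalso
      apply hγB
      rwa [refl_apply, h, zero_smul, sub_zero]
    · have := h₂ γ hγ h; rw [h]; linarith

/-- `B` and `r i · B` are always comparable. -/
lemma up_trichotomy (S : SLRS V) {B : Set V} (hB : S.IsOrthoSet B) (i : Fin S.n) :
    S.rAct i B = B ∨ S.Up i B ∨ S.Up i (S.rAct i B) := by
  by_cases hi : S.α i ∈ B
  · exact Or.inl (S.rAct_of_mem hB hi)
  by_cases hne : ∃ β ∈ B, ⟪β, S.α i⟫_ℝ ≠ 0
  · right
    obtain ⟨β₀, hβ₀, h₀⟩ := hne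
    obtain ⟨β, ⟨hβ, hβi⟩, hmin⟩ := Set.exists_min_image {β | β ∈ B ∧ ⟪β, S.α i⟫_ℝ ≠ 0} S.ht
      ((S.finite_pos hB.1).subset fun x hx => hx.1) ⟨β₀, hβ₀, h₀⟩
    by_cases hex : ∃ δ ∈ B, ⟪δ, S.α i⟫_ℝ = 1 ∧ S.ht δ ≤ S.ht β
    · right
      obtain ⟨δ, hδ, hδi, hle⟩ := hex
      have hδm : S.refl i δ ∈ S.refl i '' B := ⟨δ, hδ, rfl⟩
      have hδn : ⟪S.refl i δ, S.α i⟫_ℝ = -1 := by rw [inner_refl_self, hδi]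
      rw [S.rAct_eq_image hB.1 hi]
      refine ⟨⟨_, hδm, hδn⟩, ?_⟩
      rintro _ ⟨γ, hγ, rfl⟩ h
      refine ⟨_, hδm, hδn, ?_⟩
      rw [inner_refl_self] at h
      have h' : ⟪γ, S.α i⟫_ℝ = -1 := by linarith
      have := hmin γ ⟨hγ, by rw [h']; norm_num⟩
      rw [ht_refl, ht_refl, hδi, h']
      linarith
    · left
      push Not at hex
      have hβn : ⟪β, S.α i⟫_ℝ = -1 := by
        rcases S.inner_cases_of_mem (hB.1 hβ) (fun h => hi (h ▸ hβ)) with h | h | h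
        · exact h
        · exact absurd h hβi
        · exact absurd (hex β hβ h) (lt_irrefl _)
      exact ⟨⟨β, hβ, hβn⟩, fun γ hγ h => ⟨β, hβ, hβn, hex γ hγ h⟩⟩
  · left
    push Not at hne
    exact S.rAct_eq_self hB.1 fun β hβ => Or.inr (hne β hβ)

end Order

section Confluence

/-! ### Local confluence -/

/-- For orthogonal simple roots, `r i` still raises `r j · B` unless `B` contains `β` and
`β + α i + α j`, in which case admissibility forces `r i · B = r j · B`. -/
lemma up_comm (S : SLRS V) {𝓑 : Set (Set V)} (hadm : S.Admissible 𝓑) {B : Set V}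
    (hB : S.IsOrthoSet B) {i j : Fin S.n} (hmem : S.rAct i B ∈ 𝓑)
    (hij : ⟪S.α i, S.α j⟫_ℝ = 0) (hi : S.Up i B) (hj : S.Up j B)
    (hne : S.rAct i B ≠ S.rAct j B) : S.Up i (S.rAct j B) := by
  have hi0 := hi.alpha_not_mem hB
  have hj0 := hj.alpha_not_mem hB
  have hji : ⟪S.α j, S.α i⟫_ℝ = 0 := by rw [real_inner_comm]; exact hij
  have hinner : ∀ β, ⟪S.refl j β, S.α i⟫_ℝ = ⟪β, S.α i⟫_ℝ := fun β => by
    rw [inner_refl, hji, mul_zero, sub_zero]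
  obtain ⟨β, hβ, hβi, h₁, h₂⟩ := hi.exists_min hB
  rw [S.rAct_eq_image hB.1 hj0]
  have hβ' : S.refl j β ∈ S.refl j '' B := ⟨β, hβ, rfl⟩
  refine ⟨⟨_, hβ', (hinner β).trans hβi⟩, ?_⟩
  rintro _ ⟨γ, hγ, rfl⟩ hγi
  rw [hinner] at hγi
  refine ⟨_, hβ', (hinner β).trans hβi, ?_⟩
  have hgap := h₂ γ hγ hγi
  have hβγ : β ≠ γ := by rintro rfl; rw [hβi] at hγi; norm_num at hγi
  by_contra hcon
  rw [ht_refl, ht_refl] at hcon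
  have hβc := S.inner_cases_of_mem (hB.1 hβ) (fun h => hj0 (h ▸ hβ))
  have hγc := S.inner_cases_of_mem (hB.1 hγ) (fun h => hj0 (h ▸ hγ))
  have hβj : ⟪β, S.α j⟫_ℝ = -1 := by
    rcases hβc with h | h | h <;> rcases hγc with h' | h' | h' <;> first | exact h | linarith
  have hγj : ⟪γ, S.α j⟫_ℝ = 1 := by
    rcases hβc with h | h | h <;> rcases hγc with g | g | g <;> first | exact g | linarith
  -- all the inner products are known, and `γ - β - α i - α j` has norm zero
  have heq : γ = β + S.α i + S.α j := by
    have hz : ⟪γ - (β + S.α i + S.α j), γ - (β + S.α i + S.α j)⟫_ℝ = 0 := by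
      simp only [inner_sub_left, inner_sub_right, inner_add_left, inner_add_right]
      rw [real_inner_comm β γ, real_inner_comm β (S.α i), real_inner_comm γ (S.α i),
        real_inner_comm β (S.α j), real_inner_comm γ (S.α j), hji, hij, alpha_self, alpha_self,
        hB.2 β hβ γ hγ hβγ, hβi, hγi, hβj, hγj, S.norm_two β (S.pos_subset (hB.1 hβ)),
        S.norm_two γ (S.pos_subset (hB.1 hγ))]
      norm_num
    exact sub_eq_zero.1 (inner_self_eq_zero.1 hz)
  have hij' : i ≠ j := by rintro rfl; rw [alpha_self] at hij; norm_num at hij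
  have hadj : ¬ S.adj i j := by unfold adj; rw [hij]; norm_num
  have hA := hadm.2 _ hmem i j hij' hadj ⟨S.refl i β, by
    rw [S.rAct_eq_image hB.1 hi0]
    refine ⟨⟨β, hβ, rfl⟩, γ, hγ, ?_⟩
    rw [refl_apply, refl_apply, hβi, hγi, heq]
    module⟩
  rw [S.rAct_rAct hB] at hA
  apply hne
  conv_rhs => rw [hA]
  rw [S.rAct_rAct (S.isOrthoSet_rAct hB i)]

/-- If `α i + α j ∈ B`, then a lowest root of `B` moved by an ascending `r i` would have
height at most `0`. -/
lemma Up.add_not_mem {S : SLRS V} {B : Set V} (hB : S.IsOrthoSet B) {i j : Fin S.n}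
    (hij : ⟪S.α i, S.α j⟫_ℝ = -1) (hi : S.Up i B) :
    S.α i + S.α j ∉ B := by
  intro h
  obtain ⟨β, hβ, -, -, h₂⟩ := hi.exists_min hB
  have h3 := h₂ _ h (by
    rw [inner_add_left, alpha_self, real_inner_comm (S.α i) (S.α j), hij]; norm_num)
  rw [map_add, S.ht_alpha, S.ht_alpha] at h3
  have := S.ht_pos (hB.1 hβ)
  linarith

lemma inner_add_cases (S : SLRS V) {i j : Fin S.n} {β : V} (hij : ⟪S.α i, S.α j⟫_ℝ = -1)
    (hβ : β ∈ S.Pos) (hne : β ≠ S.α i + S.α j) :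
    ⟪β, S.α i⟫_ℝ + ⟪β, S.α j⟫_ℝ ≠ 2 ∧ ⟪β, S.α i⟫_ℝ + ⟪β, S.α j⟫_ℝ ≠ -2 := by
  have hmem := S.add_mem (S.alpha_mem i) (S.alpha_mem j) hij
  rw [← inner_add_right]
  refine ⟨fun h => hne (S.eq_of_inner_two (S.pos_subset hβ) hmem h), fun h => ?_⟩
  have h1 := congrArg S.ht (S.eq_neg_of_inner (S.pos_subset hβ) hmem h)
  rw [map_neg, map_add, S.ht_alpha, S.ht_alpha] at h1
  have := S.ht_pos hβ
  linarith

/-- For adjacent nodes, if `r i` and `r j` both raise `B`, then each letter of the word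
`r i r j r i` raises, and no root of `B` changes sign along the way. -/
lemma up_braid (S : SLRS V) {B : Set V} (hB : S.IsOrthoSet B) {i j : Fin S.n}
    (hij : ⟪S.α i, S.α j⟫_ℝ = -1) (hi : S.Up i B) (hj : S.Up j B) :
    S.Up j (S.rAct i B) ∧ S.Up i (S.rAct j (S.rAct i B)) ∧
      S.rAct i (S.rAct j (S.rAct i B)) =
        (fun β => S.refl i (S.refl j (S.refl i β))) '' B := by
  have hi0 := hi.alpha_not_mem hB
  have hj0 := hj.alpha_not_mem hB
  have hs0 := hi.add_not_mem hB hij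
  have hji : ⟪S.α j, S.α i⟫_ℝ = -1 := by rw [real_inner_comm]; exact hij
  have hB1 := S.isOrthoSet_rAct hB i
  have hB2 := S.isOrthoSet_rAct hB1 j
  have e1 := S.rAct_eq_image hB.1 hi0
  have hj1 : S.α j ∉ S.rAct i B := by
    rw [e1]
    rintro ⟨β, hβ, h⟩
    apply hs0
    have h1 := S.refl_refl i β
    rw [h, refl_apply, hji, neg_one_smul, sub_neg_eq_add, add_comm] at h1
    rwa [h1]
  have e2 : S.rAct j (S.rAct i B) = (fun β => S.refl j (S.refl i β)) '' B := by
    rw [S.rAct_eq_image hB1.1 hj1, e1, Set.image_image]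
  have hi2 : S.α i ∉ S.rAct j (S.rAct i B) := by
    rw [e2]
    rintro ⟨β, hβ, h⟩
    apply hj0
    have h1 := S.refl_refl j (S.refl i β)
    have h2 := S.refl_refl i β
    simp only at h
    rw [h, refl_apply, hij, neg_one_smul, sub_neg_eq_add] at h1
    rw [← h1, refl_apply, inner_add_left, alpha_self, hji] at h2
    have h3 : β = S.α j := by rw [← h2]; module
    rwa [← h3]
  have e3 : S.rAct i (S.rAct j (S.rAct i B)) =
      (fun β => S.refl i (S.refl j (S.refl i β))) '' B := by
    rw [S.rAct_eq_image hB2.1 hi2, e2, Set.image_image]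
  obtain ⟨x, hx, hxi, hx₁, hx₂⟩ := hi.exists_min hB
  obtain ⟨y, hy, hyj, hy₁, hy₂⟩ := hj.exists_min hB
  have ci : ∀ β ∈ B, _ := fun β hβ =>
    S.inner_cases_of_mem (i := i) (hB.1 hβ) (fun h => hi0 (h ▸ hβ))
  have cj : ∀ β ∈ B, _ := fun β hβ =>
    S.inner_cases_of_mem (i := j) (hB.1 hβ) (fun h => hj0 (h ▸ hβ))
  have cs : ∀ β ∈ B, _ := fun β hβ =>
    S.inner_add_cases hij (hB.1 hβ) (fun h => hs0 (h ▸ hβ))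
  have hxj : ⟪x, S.α j⟫_ℝ = 0 ∨ ⟪x, S.α j⟫_ℝ = 1 := by
    rcases cj x hx with h | h | h
    · exact absurd (by rw [hxi, h]; norm_num) (cs x hx).2
    · exact Or.inl h
    · exact Or.inr h
  have hyi : ⟪y, S.α i⟫_ℝ = 0 ∨ ⟪y, S.α i⟫_ℝ = 1 := by
    rcases ci y hy with h | h | h
    · exact absurd (by rw [hyj, h]; norm_num) (cs y hy).2
    · exact Or.inl h
    · exact Or.inr h
  have in1 : ∀ β, ⟪S.refl i β, S.α j⟫_ℝ = ⟪β, S.α i⟫_ℝ + ⟪β, S.α j⟫_ℝ := fun β => by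
    rw [inner_refl, hij]; ring
  have in2 : ∀ β, ⟪S.refl j (S.refl i β), S.α i⟫_ℝ = ⟪β, S.α j⟫_ℝ := fun β => by
    rw [inner_refl, hji, inner_refl_self, in1]; ring
  have ht2 : ∀ β, S.ht (S.refl j (S.refl i β)) =
      S.ht β - 2 * ⟪β, S.α i⟫_ℝ - ⟪β, S.α j⟫_ℝ := fun β => by
    rw [ht_refl, ht_refl, in1]; ring
  refine ⟨?_, ?_, e3⟩
  · rw [e1]
    -- it cannot be that `r j` lowers `x` and `r i` lowers `y`
    have hexcl : ⟪x, S.α j⟫_ℝ = 1 → ⟪y, S.α i⟫_ℝ = 1 → False := fun h h' => by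
      have := hx₂ y hy h'
      have := hy₂ x hx h
      linarith
    constructor
    · rcases hxj with h | h
      · exact ⟨_, ⟨x, hx, rfl⟩, by rw [in1, hxi, h]; norm_num⟩
      · rcases hyi with h' | h'
        · exact ⟨_, ⟨y, hy, rfl⟩, by rw [in1, hyj, h']; norm_num⟩
        · exact (hexcl h h').elim
    · rintro _ ⟨γ, hγ, rfl⟩ h
      rw [in1] at h
      rcases ci γ hγ with hγi | hγi | hγi
      · exfalso
        rcases cj γ hγ with h' | h' | h' <;> linarith
      · have hγj : ⟪γ, S.α j⟫_ℝ = 1 := by linarith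
        have h3 := hy₂ γ hγ hγj
        rcases hyi with h' | h'
        · refine ⟨_, ⟨y, hy, rfl⟩, by rw [in1, hyj, h']; norm_num, ?_⟩
          rw [ht_refl, ht_refl, h', hγi]; linarith
        · rcases hxj with h'' | h''
          · refine ⟨_, ⟨x, hx, rfl⟩, by rw [in1, hxi, h'']; norm_num, ?_⟩
            have := hx₂ y hy h'
            rw [ht_refl, ht_refl, hxi, hγi]; linarith
          · exact (hexcl h'' h').elim
      · have hγj : ⟪γ, S.α j⟫_ℝ = 0 := by linarith
        have h3 := hx₂ γ hγ hγi
        rcases hxj with h' | h'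
        · refine ⟨_, ⟨x, hx, rfl⟩, by rw [in1, hxi, h']; norm_num, ?_⟩
          have := S.three_gap hB hij hx hγ hxi hγi h' hγj (by linarith)
          rw [ht_refl, ht_refl, hxi, hγi]; linarith
        · rcases hyi with h'' | h''
          · refine ⟨_, ⟨y, hy, rfl⟩, by rw [in1, hyj, h'']; norm_num, ?_⟩
            have := hy₂ x hx h'
            rw [ht_refl, ht_refl, h'', hγi]; linarith
          · exact (hexcl h' h'').elim
  · rw [e2]
    refine ⟨⟨_, ⟨y, hy, rfl⟩, by simp only [in2, hyj]⟩, ?_⟩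
    rintro _ ⟨γ, hγ, rfl⟩ h
    simp only [in2] at h
    refine ⟨_, ⟨y, hy, rfl⟩, by simp only [in2, hyj], ?_⟩
    simp only [ht2, hyj, h]
    have h3 := hy₂ γ hγ h
    rcases ci γ hγ with hγi | hγi | hγi
    · rcases hyi with h' | h' <;> rw [h', hγi] <;> linarith
    · rcases hyi with h' | h'
      · have := S.three_gap hB hji hy hγ hyj h h' hγi (by linarith)
        rw [h', hγi]; linarith
      · rw [h', hγi]; linarith
    · exact absurd (by rw [hγi, h]; norm_num) (cs γ hγ).1

/-- One ascending reflection leads from `B` to `C`. -/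
def Step (S : SLRS V) (B C : Set V) : Prop := ∃ i, S.Up i B ∧ C = S.rAct i B

lemma local_confluence (S : SLRS V) {𝓑 : Set (Set V)} (hadm : S.Admissible 𝓑) {B C D : Set V}
    (hB : S.IsOrthoSet B) (hC : C ∈ 𝓑) (hD : D ∈ 𝓑) (h₁ : S.Step B C) (h₂ : S.Step B D) :
    ∃ E, Relation.ReflTransGen S.Step C E ∧ Relation.ReflTransGen S.Step D E := by
  obtain ⟨i, hi, rfl⟩ := h₁
  obtain ⟨j, hj, rfl⟩ := h₂
  by_cases hne : S.rAct i B = S.rAct j B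
  · exact ⟨_, .refl, hne ▸ .refl⟩
  rcases S.alpha_cases i j with h | h | h
  · exact absurd (by unfold rAct SLRS.refl; rw [h]) hne
  · have h' : ⟪S.α j, S.α i⟫_ℝ = 0 := by rw [real_inner_comm]; exact h
    have u₁ := S.up_comm hadm hB hD h' hj hi (Ne.symm hne)
    have u₂ := S.up_comm hadm hB hC h hi hj hne
    refine ⟨S.rAct j (S.rAct i B), .single ⟨j, u₁, rfl⟩, .single ⟨i, u₂, ?_⟩⟩
    have hB1 := S.isOrthoSet_rAct hB i
    have hB2 := S.isOrthoSet_rAct hB j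
    rw [S.rAct_eq_image hB1.1 (u₁.alpha_not_mem hB1),
      S.rAct_eq_image hB2.1 (u₂.alpha_not_mem hB2),
      S.rAct_eq_image hB.1 (hi.alpha_not_mem hB), S.rAct_eq_image hB.1 (hj.alpha_not_mem hB),
      Set.image_image, Set.image_image]
    simp only [S.refl_comm h]
  · have h' : ⟪S.α j, S.α i⟫_ℝ = -1 := by rw [real_inner_comm]; exact h
    obtain ⟨a₁, a₂, a₃⟩ := S.up_braid hB h hi hj
    obtain ⟨b₁, b₂, b₃⟩ := S.up_braid hB h' hj hi
    refine ⟨S.rAct i (S.rAct j (S.rAct i B)), .tail (.single ⟨j, a₁, rfl⟩) ⟨i, a₂, rfl⟩,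
      .tail (.single ⟨i, b₁, rfl⟩) ⟨j, b₂, ?_⟩⟩
    rw [a₃, b₃]
    simp only [S.refl_braid h]

/-! ### Global confluence -/

lemma orbit_ortho (S : SLRS V) {B₁ B : Set V} (h₁ : S.IsOrthoSet B₁) (h : B ∈ S.orbitOf B₁) :
    S.IsOrthoSet B ∧ B.ncard = B₁.ncard := by
  unfold orbitOf at h
  induction h with
  | refl => exact ⟨h₁, rfl⟩
  | tail _ h ih =>
    obtain ⟨i, rfl⟩ := h
    exact ⟨S.isOrthoSet_rAct ih.1 i, (S.ncard_rAct ih.1 i).trans ih.2⟩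

lemma orbit_rAct (S : SLRS V) {B₁ B : Set V} (h : B ∈ S.orbitOf B₁) (i : Fin S.n) :
    S.rAct i B ∈ S.orbitOf B₁ := Relation.ReflTransGen.tail h ⟨i, rfl⟩

lemma steps_orbit (S : SLRS V) {B₁ B C : Set V} (h : B ∈ S.orbitOf B₁)
    (hs : Relation.ReflTransGen S.Step B C) : C ∈ S.orbitOf B₁ := by
  induction hs with
  | refl => exact h
  | tail _ hstep ih =>
    obtain ⟨i, -, rfl⟩ := hstep
    exact S.orbit_rAct ih i

lemma steps_below (S : SLRS V) {B₁ B C : Set V} (h₁ : S.IsOrthoSet B₁)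
    (h : B ∈ S.orbitOf B₁)
    (hs : Relation.ReflTransGen S.Step B C) : B = C ∨ S.Below B C := by
  induction hs with
  | refl => exact Or.inl rfl
  | tail hs hstep ih =>
    obtain ⟨i, hi, rfl⟩ := hstep
    have := hi.below (S.orbit_ortho h₁ (S.steps_orbit h hs)).1
    rcases ih with rfl | ih
    · exact Or.inr this
    · exact Or.inr (ih.trans this)

/-- Newman's lemma for ascending reflections: every `B` in an admissible orbit ascends to
a set which no fundamental reflection raises, and all ascents from `B` can be continued to it. -/
lemma exists_normal_form (S : SLRS V) {B₁ : Set V} (h₁ : S.IsOrthoSet B₁)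
    (hadm : S.Admissible (S.orbitOf B₁)) :
    ∀ B ∈ S.orbitOf B₁, ∃ N, (∀ i, ¬ S.Up i N) ∧
      ∀ C, Relation.ReflTransGen S.Step B C → Relation.ReflTransGen S.Step C N := by
  have hfin : (S.orbitOf B₁).Finite :=
    S.finite.finite_subsets.subset fun B hB =>
      (S.orbit_ortho h₁ hB).1.1.trans S.pos_subset
  -- a strict order on a finite set is well founded
  have hwf : (S.orbitOf B₁).WellFoundedOn fun X Y => S.Below Y X := by
    have : IsStrictOrder (Set V) fun X Y => S.Below Y X :=
      { irrefl := fun _ => Below.irrefl, trans := fun _ _ _ h h' => h'.trans h }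
    exact hfin.wellFoundedOn
  intro B hB
  refine hwf.induction (P := fun B => ∃ N, (∀ i, ¬ S.Up i N) ∧
    ∀ C, Relation.ReflTransGen S.Step B C → Relation.ReflTransGen S.Step C N) hB ?_
  intro B hB ih
  have hBo := (S.orbit_ortho h₁ hB).1
  by_cases hN : ∀ i, ¬ S.Up i B
  · refine ⟨B, hN, fun C hC => ?_⟩
    rcases hC.cases_head with rfl | ⟨D, ⟨i, hi, -⟩, -⟩
    · exact .refl
    · exact absurd hi (hN i)
  · push Not at hN
    obtain ⟨i, hi⟩ := hN
    have hCmem := S.orbit_rAct hB i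
    obtain ⟨N, hN, hN'⟩ := ih _ hCmem (hi.below hBo)
    refine ⟨N, hN, fun C hC => ?_⟩
    rcases hC.cases_head with rfl | ⟨D, hD, hDC⟩
    · exact .head ⟨i, hi, rfl⟩ (hN' _ .refl)
    · have hDmem : D ∈ S.orbitOf B₁ := S.steps_orbit hB (.single hD)
      have hBD : S.Below B D := by
        obtain ⟨j, hj, rfl⟩ := hD
        exact hj.below hBo
      obtain ⟨N', -, hN₂⟩ := ih D hDmem hBD
      obtain ⟨E, hE₁, hE₂⟩ := S.local_confluence hadm hBo hCmem hDmem ⟨i, hi, rfl⟩ hD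
      -- `E` ascends to both `N` and `N'`, and nothing ascends from `N`
      have hNN' : Relation.ReflTransGen S.Step N N' := hN₂ N (hE₂.trans (hN' E hE₁))
      have : N = N' := by
        rcases hNN'.cases_head with h | ⟨_, ⟨k, hk, -⟩, -⟩
        · exact h
        · exact absurd hk (hN k)
      rw [this]
      exact hN₂ C hDC

lemma normal_eq {S : SLRS V} {N C : Set V} (hN : ∀ i, ¬ S.Up i N)
    (h : Relation.ReflTransGen S.Step N C) : N = C := by
  rcases h.cases_head with h | ⟨_, ⟨k, hk, -⟩, -⟩
  · exact h
  · exact absurd hk (hN k)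

/-- As `B` and `r i · B` are always comparable, the whole orbit ascends to a single element. -/
lemma exists_top (S : SLRS V) {B₁ : Set V} (h₁ : S.IsOrthoSet B₁)
    (hadm : S.Admissible (S.orbitOf B₁)) :
    ∃ N, ∀ B ∈ S.orbitOf B₁, Relation.ReflTransGen S.Step B N := by
  obtain ⟨N, hN, hN'⟩ := S.exists_normal_form h₁ hadm B₁ .refl
  refine ⟨N, fun B hB => ?_⟩
  unfold orbitOf at hB
  induction hB with
  | refl => exact hN' _ .refl
  | @tail B C hB hstep ih =>
    obtain ⟨i, rfl⟩ := hstep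
    have hBo := (S.orbit_ortho h₁ hB).1
    rcases S.up_trichotomy hBo i with h | h | h
    · rwa [h]
    · obtain ⟨N', -, hN₂⟩ := S.exists_normal_form h₁ hadm B hB
      have h3 := normal_eq hN (hN₂ N ih)
      rw [h3]
      exact hN₂ _ (.single ⟨i, h, rfl⟩)
    · exact .head ⟨i, h, (S.rAct_rAct hBo i).symm⟩ ih

/-- An ascent from `B` to `N`, read backwards, is a descending chain from `N` to `B`. -/
lemma exists_chain (S : SLRS V) {B₁ B N : Set V} (h₁ : S.IsOrthoSet B₁)
    (hB : B ∈ S.orbitOf B₁) (h : Relation.ReflTransGen S.Step B N) :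
    ∃ l : List (Fin S.n), S.suffixAct l N = B ∧ S.DescChain l N := by
  induction h using Relation.ReflTransGen.head_induction_on with
  | refl => exact ⟨[], rfl, fun k hk => absurd hk (by simp)⟩
  | @head B C hstep hs ih =>
    obtain ⟨i, hi, rfl⟩ := hstep
    have hC := S.orbit_rAct hB i
    obtain ⟨l, hl, hd⟩ := ih hC
    obtain ⟨hBo, hBc⟩ := S.orbit_ortho h₁ hB
    obtain ⟨hCo, hCc⟩ := S.orbit_ortho h₁ hC
    have hil : S.suffixAct (i :: l) N = B := by
      change S.rAct i (S.suffixAct l N) = B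
      rw [hl, S.rAct_rAct hBo]
    refine ⟨i :: l, hil, ?_⟩
    rintro (_ | k) hk
    · rw [List.drop_zero, List.drop_succ_cons, List.drop_zero, hil, hl,
        S.lt_iff_below (S.finite_pos hBo.1) (S.finite_pos hCo.1) (hBc.trans hCc.symm)]
      exact hi.below hBo
    · exact hd k (by simpa using hk)

end Confluence

end SLRS

/-- Lemma 3.5 and Corollary 3.6: an admissible orbit `𝓑`
has a unique maximal element `B₀`, and every `B ∈ 𝓑` is reached from `B₀` by a
strictly descending chain of fundamental reflections. -/
theorem unique_max_and_desc_chain (S : SLRS V) (𝓑 : Set (Set V))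
    (hadm : S.Admissible 𝓑) :
    (∃! B₀, B₀ ∈ 𝓑 ∧ ∀ C ∈ 𝓑, ¬ S.lt B₀ C) ∧
    (∀ B₀, B₀ ∈ 𝓑 → (∀ C ∈ 𝓑, ¬ S.lt B₀ C) →
      ∀ B ∈ 𝓑, ∃ l : List (Fin S.n),
        S.suffixAct l B₀ = B ∧ S.DescChain l B₀) := by
  obtain ⟨B₁, h₁, rfl⟩ := hadm.1
  obtain ⟨N, hN⟩ := S.exists_top h₁ hadm
  have hNmem : N ∈ S.orbitOf B₁ := S.steps_orbit .refl (hN B₁ .refl)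
  have hlt : ∀ X ∈ S.orbitOf B₁, ∀ Y ∈ S.orbitOf B₁, (S.lt X Y ↔ S.Below X Y) :=
    fun X hX Y hY =>
      S.lt_iff_below (S.finite_pos (S.orbit_ortho h₁ hX).1.1)
        (S.finite_pos (S.orbit_ortho h₁ hY).1.1)
        ((S.orbit_ortho h₁ hX).2.trans (S.orbit_ortho h₁ hY).2.symm)
  have huniq : ∀ X ∈ S.orbitOf B₁, (∀ C ∈ S.orbitOf B₁, ¬ S.lt X C) → X = N := by
    intro X hX hmax
    rcases S.steps_below h₁ hX (hN X hX) with h | h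
    · exact h
    · exact absurd ((hlt X hX N hNmem).2 h) (hmax N hNmem)
  refine ⟨⟨N, ⟨hNmem, fun C hC h => ?_⟩, fun X hX => huniq X hX.1 hX.2⟩, ?_⟩
  · rw [hlt N hNmem C hC] at h
    rcases S.steps_below h₁ hC (hN C hC) with rfl | h'
    · exact Below.irrefl h
    · exact Below.irrefl (h.trans h')
  · intro B₀ hB₀ hmax B hB
    rw [huniq B₀ hB₀ hmax]
    exact S.exists_chain h₁ hB (hN B hB)
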